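/- Let C : X × ℕ × ℤ^d → (subsets of ℤ^d) be measurable and satisfy for all γ, n ≥ 1 and x, y, z ∈ ℤ^d: (i) x ∈ C(γ, n, x); (ii) if C(γ, n, x) ∩ C(γ, n, y) ≠ ∅ then C(γ, n, x) = C(γ, n, y); (iii) C(γ, n, x) ⊆ C(γ, n+1, x); (iv) C(θ^z γ, n, θ^z x) = θ^z C(γ, n, x); and suppose that for ℙ-a.e. γ every C(γ, n, x) is finite and ∪_{n ≥ 1} C(γ, n, 0) = ℤ^d. Then there exists a translation-equivariant matching rule Φ such that for ℙ-a.e. γ: every site x is matched by Φ(γ, ·) to a site lying in C(γ, n, x) for some n, and for every n ≥ 1 and every n-clump L = C(γ, n, x), the number of sites of L whose partner under Φ(γ, ·) lies outside L equals |Σ_{x ∈ L} (2γ(x) − 1)|. -/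

import Mathlib

open MeasureTheory ENNReal

noncomputable section

/-- Sites: the lattice `ℤ^d`. -/
abbrev Site (d : ℕ) := Fin d → ℤ

/-- Configurations: elements of `{0,1}^{ℤ^d}`, encoded with `Bool`. -/
abbrev Config (d : ℕ) := Site d → Bool

/-- The translation `θ^z` acting on configurations: `(θ^z γ)(x) = γ(x - z)`. -/
def shiftCfg {d : ℕ} (z : Site d) (γ : Config d) : Config d := fun x => γ (x - z)

/-- `φ` is a matching on `γ`: an involutive bijection matching ones to zeros. -/
def IsMatching {d : ℕ} (γ : Config d) (φ : Site d → Site d) : Prop :=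
  Function.Bijective φ ∧ (∀ x, φ (φ x) = x) ∧ ∀ x, γ (φ x) = !(γ x)

/-- `Φ` is a matching rule with respect to the measure `P`. -/
def IsMatchingRule {d : ℕ} (P : Measure (Config d)) (Φ : Config d → Site d → Site d) : Prop :=
  (∀ x : Site d, Measurable fun γ => Φ γ x) ∧ ∀ᵐ γ ∂P, IsMatching γ (Φ γ)

/-- `Φ` is translation-equivariant with respect to `P`. -/
def IsEquivariant {d : ℕ} (P : Measure (Config d)) (Φ : Config d → Site d → Site d) : Prop :=
  ∀ z x : Site d, ∀ᵐ γ ∂P, Φ (shiftCfg z γ) (x + z) = Φ γ x + z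

/-- `P` is the product measure with i.i.d. Bernoulli(1/2) coordinates, characterized by
its values on cylinder events. -/
def IsBernoulliHalfProduct {d : ℕ} (P : Measure (Config d)) : Prop :=
  IsProbabilityMeasure P ∧
    ∀ (s : Finset (Site d)) (f : Site d → Bool),
      P {γ | ∀ x ∈ s, γ x = f x} = (1 / 2 : ℝ≥0∞) ^ s.card

/-- `Z_Φ(γ) = ‖Φ(γ, 0)‖`, the `ℓ^∞` distance from the origin to its partner. -/
def ZΦ {d : ℕ} (Φ : Config d → Site d → Site d) (γ : Config d) : ℝ := ‖Φ γ 0‖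

/-- Embedding of the lattice in `ℝ^d`. -/
def toR {d : ℕ} (x : Site d) : Fin d → ℝ := fun i => (x i : ℝ)

/-- The first standard basis vector `e₁`. -/
def e1 (d : ℕ) : Site d := fun i => if (i : ℕ) = 0 then 1 else 0

/-- `x` is a `k`-seed for `γ`. -/
def IsSeed {d : ℕ} (γ : Config d) (k : ℕ) (x : Site d) : Prop :=
  γ x = true ∧ ∀ n : ℕ, 1 ≤ n → n ≤ k - 1 → γ (x + (n : ℤ) • e1 d) = false

/-- `r_k = (2^k k²)^{1/d} + 1/2`. -/
def rr (d k : ℕ) : ℝ := ((2 : ℝ) ^ k * (k : ℝ) ^ 2) ^ ((d : ℝ)⁻¹) + 1 / 2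

/-- The shift `s_k = ⌊100 r_k⌋ e₁`. -/
def ss (d k : ℕ) : Site d := ⌊(100 : ℝ) * rr d k⌋ • e1 d

/-- `W_k(γ)`: the union of all `k`-cutters. -/
def cutters {d : ℕ} (γ : Config d) (k : ℕ) : Set (Fin d → ℝ) :=
  ⋃ x ∈ {x : Site d | IsSeed γ k (x - ss d k)}, {y : Fin d → ℝ | ‖y - toR x‖ = rr d k}

/-- The `k`-blob containing the point `p ∈ ℝ^d`: the connected component of `p` in the
complement of all `j`-cutters with `j > k`. -/
def blob {d : ℕ} (γ : Config d) (k : ℕ) (p : Fin d → ℝ) : Set (Fin d → ℝ) :=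
  connectedComponentIn (⋃ j ∈ {j : ℕ | k < j}, cutters γ j)ᶜ p

/-- The `k`-clump of a site `x`: the lattice points of the `k`-blob containing `x`. -/
def clump {d : ℕ} (γ : Config d) (k : ℕ) (x : Site d) : Set (Site d) :=
  {y : Site d | toR y ∈ blob γ k (toR x)}

/-- The event `E_k`: the cube `S(-s_k, r_k - 1)` contains a `k`-seed. -/
def Ek (d k : ℕ) : Set (Config d) :=
  {γ | ∃ y : Site d, IsSeed γ k y ∧ ‖toR y + toR (ss d k)‖ ≤ rr d k - 1}

/-- A `k`-seed lying in the annulus `S(-s_k, r_k + s) \ S(-s_k, r_k - s)`. -/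
def SeedInAnnulus {d : ℕ} (γ : Config d) (k : ℕ) (s : ℝ) (y : Site d) : Prop :=
  IsSeed γ k y ∧ ‖toR y + toR (ss d k)‖ ≤ rr d k + s ∧ rr d k - s < ‖toR y + toR (ss d k)‖

/-- The event `U_k(s)`: `S(-s_k, r_k + s) \ S(-s_k, r_k - s)` contains a `k`-seed. -/
def Uk (d : ℕ) (k : ℕ) (s : ℝ) : Set (Config d) :=
  {γ | ∃ y : Site d, SeedInAnnulus γ k s y}

/-- The event `C_k(s) = ∪_{j ≥ k} U_j(s)`. -/
def Ck (d : ℕ) (k : ℕ) (s : ℝ) : Set (Config d) :=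
  {γ | ∃ j : ℕ, k ≤ j ∧ γ ∈ Uk d j s}

/-- `±1`-valued spin `2γ(x) - 1`. -/
def pm1 {d : ℕ} (γ : Config d) (y : Site d) : ℤ := if γ y then 1 else -1

/-- `Φ` matches maximally within clumps: a.s. every clump is finite and the number of
sites of each `k`-clump `L` matched outside `L` equals `|Σ_{x ∈ L} (2γ(x) - 1)|`. -/
def MatchesMaximally {d : ℕ} (P : Measure (Config d))
    (Φ : Config d → Site d → Site d) : Prop :=
  ∀ᵐ γ ∂P, ∀ k : ℕ, 1 ≤ k → ∀ x : Site d,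
    (clump γ k x).Finite ∧
      (({y ∈ clump γ k x | Φ γ y ∉ clump γ k x}.ncard : ℤ)
        = |∑ᶠ y ∈ clump γ k x, pm1 γ y|)

/-!
Match greedily: within each `1`-clump pair the `k`-th remaining `1` with the `k`-th remaining `0` in
lexicographic order, then do the same with the leftovers in each `2`-clump, and so on. After the
`n`-th step the leftovers of a finite `n`-clump all have one colour, so their number is the
discrepancy of the clump, and the sites matched by then have their partners in the clump.

It remains to see that almost surely every site is matched. Any two sites eventually share a clump,
so all unmatched sites of a configuration have the same colour; let `A` be the invariant event that
some site of colour `b` stays unmatched. By mass transport, on `A` the origin is a matched `1` as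
often as it is a matched `0`. On `A` it also is a `1` as often as it is a `0`: the spins
`2γ(x) - 1` are orthonormal in `L²` and by invariance all have the same inner product with the
indicator of `A`, which vanishes by Bessel's inequality. Hence on `A` the origin is an unmatched
site of colour `b` as often as one of the other colour, that is, with probability zero.
-/

section Rank

variable {V : Type*} (r : V → V → Prop)

/-- The rank of `x` in `A` with respect to the strict order `r`: the number of elements of `A`
preceding `x`, counted in `ℕ∞` so that infinite ranks can be told apart from rank `0`. -/
def rankIn (A : Set V) (x : V) : ℕ∞ := {z ∈ A | r z x}.encard

variable {r} {A : Set V} {x y : V}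

lemma rankIn_ne_top (hA : A.Finite) : rankIn r A x ≠ ⊤ :=
  (hA.sep _).encard_lt_top.ne

variable [IsStrictTotalOrder V r]

lemma rankIn_lt_rankIn (hx : x ∈ A) (hxy : r x y) (hfin : rankIn r A x ≠ ⊤) :
    rankIn r A x < rankIn r A y :=
  (Set.encard_ne_top_iff.1 hfin).encard_lt_encard
    ⟨fun _ hz => ⟨hz.1, _root_.trans hz.2 hxy⟩, fun h => irrefl x (h ⟨hx, hxy⟩).2⟩

lemma eq_of_rankIn_eq (hx : x ∈ A) (hy : y ∈ A) (hfin : rankIn r A x ≠ ⊤)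
    (h : rankIn r A x = rankIn r A y) : x = y := by
  rcases trichotomous_of r x y with hxy | rfl | hyx
  · exact absurd h (rankIn_lt_rankIn hx hxy hfin).ne
  · rfl
  · exact absurd h (rankIn_lt_rankIn hy hyx (h ▸ hfin)).ne'

lemma rankIn_lt_encard (hA : A.Finite) (hx : x ∈ A) : rankIn r A x < A.encard :=
  (hA.sep _).encard_lt_encard ⟨Set.sep_subset _ _, fun h => irrefl x (h hx).2⟩

lemma exists_rankIn_eq (hA : A.Finite) {k : ℕ∞} (hk : k < A.encard) :
    ∃ x ∈ A, rankIn r A x = k := by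
  lift k to ℕ using hk.ne_top
  rw [hA.encard_eq_coe_toFinset_card, Nat.cast_lt] at hk
  have hcoe (x : V) : ((rankIn r A x).toNat : ℕ∞) = rankIn r A x :=
    ENat.natCast_toNat (rankIn_ne_top hA)
  have hmaps : Set.MapsTo (fun x => (rankIn r A x).toNat) hA.toFinset
      (Finset.range hA.toFinset.card) := by
    intro x hx
    rw [Finset.mem_coe, Finset.mem_range, ← Nat.cast_lt (α := ℕ∞), hcoe,
      ← hA.encard_eq_coe_toFinset_card]
    exact rankIn_lt_encard hA (hA.mem_toFinset.1 hx)
  have hinj : Set.InjOn (fun x => (rankIn r A x).toNat) hA.toFinset := fun x hx y hy h =>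
    eq_of_rankIn_eq (hA.mem_toFinset.1 hx) (hA.mem_toFinset.1 hy) (rankIn_ne_top hA)
      (by rw [← hcoe x, ← hcoe y]; exact congrArg _ h)
  obtain ⟨x, hx, hxk⟩ := Finset.surjOn_of_injOn_of_card_le _ hmaps hinj
    (Finset.card_range _).le (Finset.mem_coe.2 (Finset.mem_range.2 hk))
  exact ⟨x, hA.mem_toFinset.1 hx, by rw [← hcoe x]; exact congrArg _ hxk⟩

end Rank

section Pairing

variable {V : Type*} (r : V → V → Prop) (s : Setoid V) (c : V → Bool) (W : Set V)

/-- The elements of `W` in the class and of the colour of `x`. -/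
def peers (x : V) : Set V := {z ∈ W | s x z ∧ c z = c x}

/-- One step of the matching algorithm: within each class of `s`, the `k`-th element of `W` of one
colour is paired with the `k`-th element of `W` of the other colour, for every finite `k`. -/
structure Pairs (x y : V) : Prop where
  mem_left : x ∈ W
  mem_right : y ∈ W
  rel : s x y
  colour_eq : c y = !c x
  rankIn_eq : rankIn r (peers s c W x) x = rankIn r (peers s c W y) y
  rankIn_ne_top : rankIn r (peers s c W x) x ≠ ⊤

variable {r s c W} {x y z : V}

lemma pairs_iff : Pairs r s c W x y ↔ x ∈ W ∧ y ∈ W ∧ s x y ∧ c y = !c x ∧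
    rankIn r (peers s c W x) x = rankIn r (peers s c W y) y ∧
    rankIn r (peers s c W x) x ≠ ⊤ :=
  ⟨fun ⟨h₁, h₂, h₃, h₄, h₅, h₆⟩ => ⟨h₁, h₂, h₃, h₄, h₅, h₆⟩,
    fun ⟨h₁, h₂, h₃, h₄, h₅, h₆⟩ => ⟨h₁, h₂, h₃, h₄, h₅, h₆⟩⟩

lemma mem_peers_self (hx : x ∈ W) : x ∈ peers s c W x := ⟨hx, s.refl x, rfl⟩

lemma peers_eq_of_mem (hy : y ∈ peers s c W x) : peers s c W y = peers s c W x := by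
  obtain ⟨-, hxy, hc⟩ := hy
  ext z
  simp only [peers, Set.mem_ofPred_eq, hc]
  exact and_congr_right' (and_congr_left'
    ⟨fun h => s.trans hxy h, fun h => s.trans (s.symm hxy) h⟩)

lemma Pairs.symm (h : Pairs r s c W x y) : Pairs r s c W y x where
  mem_left := h.mem_right
  mem_right := h.mem_left
  rel := s.symm h.rel
  colour_eq := by rw [h.colour_eq, Bool.not_not]
  rankIn_eq := h.rankIn_eq.symm
  rankIn_ne_top := h.rankIn_eq ▸ h.rankIn_ne_top

variable [IsStrictTotalOrder V r]

lemma Pairs.unique (h : Pairs r s c W x y) (h' : Pairs r s c W x z) : y = z := by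
  have hz : z ∈ peers s c W y :=
    ⟨h'.mem_right, s.trans (s.symm h.rel) h'.rel, by rw [h.colour_eq, h'.colour_eq]⟩
  have hrank := h.rankIn_eq.symm.trans h'.rankIn_eq
  rw [peers_eq_of_mem hz] at hrank
  exact eq_of_rankIn_eq (mem_peers_self h.mem_right) hz h.symm.rankIn_ne_top hrank

lemma exists_pairs_of_encard_peers_le (hfin : {z | s x z}.Finite) (hx : x ∈ W) (hxy : s x y)
    (hc : c y = !c x) (hle : (peers s c W x).encard ≤ (peers s c W y).encard) :
    ∃ z, Pairs r s c W x z := by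
  have hx_fin : (peers s c W x).Finite := hfin.subset fun z hz => hz.2.1
  have hy_fin : (peers s c W y).Finite := hfin.subset fun z hz => s.trans hxy hz.2.1
  obtain ⟨z, hz, hrank⟩ := exists_rankIn_eq (r := r) hy_fin
    ((rankIn_lt_encard (r := r) hx_fin (mem_peers_self hx)).trans_le hle)
  exact ⟨z, hx, hz.1, s.trans hxy hz.2.1, hz.2.2.trans hc,
    by rw [peers_eq_of_mem hz, hrank], rankIn_ne_top hx_fin⟩

lemma exists_pairs_left_or_right (hfin : {z | s x z}.Finite) (hx : x ∈ W) (hy : y ∈ W)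
    (hxy : s x y) (hc : c x ≠ c y) : (∃ z, Pairs r s c W x z) ∨ ∃ z, Pairs r s c W y z := by
  rcases le_total (peers s c W x).encard (peers s c W y).encard with hle | hle
  · exact .inl (exists_pairs_of_encard_peers_le hfin hx hxy (Bool.eq_not.2 hc.symm) hle)
  · refine .inr (exists_pairs_of_encard_peers_le ?_ hy (s.symm hxy) (Bool.eq_not.2 hc) hle)
    exact hfin.subset fun z hz => s.trans hxy hz

end Pairing

section Partner

variable {V : Type*} (r : V → V → Prop) (E : ℕ → Setoid V) (c : V → Bool)

/-- The sites left unpaired by the first `n` steps of the algorithm, where step `n + 1` pairs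
sites within the classes of `E n`. -/
def freeSites : ℕ → Set V
  | 0 => Set.univ
  | n + 1 => {x ∈ freeSites n | ¬ ∃ y, Pairs r (E n) c (freeSites n) x y}

/-- `x` and `y` are paired at some step of the algorithm. -/
def IsPartner (x y : V) : Prop := ∃ n, Pairs r (E n) c (freeSites r E c n) x y

open Classical in
/-- The partner of `x` produced by the algorithm, or `x` itself if `x` is never paired. -/
def partner (x : V) : V := if h : ∃ y, IsPartner r E c x y then h.choose else x

variable {r E c} {x y z : V} {n : ℕ}

lemma freeSites_antitone : Antitone (freeSites r E c) :=
  antitone_nat_of_succ_le fun _ _ hx => hx.1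

lemma notMem_freeSites_iff : x ∉ freeSites r E c n ↔
    ∃ m < n, ∃ y, Pairs r (E m) c (freeSites r E c m) x y := by
  constructor
  · intro hx
    induction n with
    | zero => exact absurd (Set.mem_univ x) hx
    | succ n ih =>
      by_cases hxn : x ∈ freeSites r E c n
      · exact ⟨n, n.lt_succ_self, by_contra fun h => hx ⟨hxn, h⟩⟩
      · obtain ⟨m, hm, hy⟩ := ih hxn
        exact ⟨m, hm.trans n.lt_succ_self, hy⟩
  · rintro ⟨m, hm, hy⟩ hx
    exact (freeSites_antitone (Nat.succ_le_of_lt hm) hx).2 hy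

lemma mem_freeSites_of_forall_not_isPartner (hx : ∀ y, ¬ IsPartner r E c x y) (n : ℕ) :
    x ∈ freeSites r E c n := by
  by_contra hn
  obtain ⟨m, -, y, hy⟩ := notMem_freeSites_iff.1 hn
  exact hx y ⟨m, hy⟩

lemma IsPartner.symm (h : IsPartner r E c x y) : IsPartner r E c y x :=
  h.imp fun _ => Pairs.symm

lemma IsPartner.colour_eq (h : IsPartner r E c x y) : c y = !c x :=
  let ⟨_, hn⟩ := h; hn.colour_eq

variable [IsStrictTotalOrder V r]

lemma IsPartner.unique (h : IsPartner r E c x y) (h' : IsPartner r E c x z) : y = z := by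
  obtain ⟨m, hm⟩ := h
  obtain ⟨n, hn⟩ := h'
  rcases lt_trichotomy m n with hmn | rfl | hnm
  · exact absurd hn.mem_left (notMem_freeSites_iff.2 ⟨m, hmn, y, hm⟩)
  · exact hm.unique hn
  · exact absurd hm.mem_left (notMem_freeSites_iff.2 ⟨n, hnm, z, hn⟩)

lemma partner_eq_iff : partner r E c x = y ↔
    IsPartner r E c x y ∨ (∀ z, ¬ IsPartner r E c x z) ∧ x = y := by
  rw [partner]
  split_ifs with h
  · have hx : ¬ ∀ z, ¬ IsPartner r E c x z := not_forall_not.2 h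
    simp only [hx, false_and, or_false]
    exact ⟨fun hy => hy ▸ h.choose_spec, fun hy => h.choose_spec.unique hy⟩
  · have hx : ∀ z, ¬ IsPartner r E c x z := not_exists.1 h
    simp only [hx, not_false_eq_true, implies_true, true_and, false_or]

lemma isPartner_partner (h : ∃ y, IsPartner r E c x y) :
    IsPartner r E c x (partner r E c x) := by
  obtain ⟨y, hy⟩ := h
  rwa [partner_eq_iff.2 (.inl hy)]

lemma partner_involutive (h : ∀ x, ∃ y, IsPartner r E c x y) :
    Function.Involutive (partner r E c) := fun x =>
  (isPartner_partner (h _)).unique (isPartner_partner (h x)).symm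

lemma colour_eq_of_mem_freeSites_succ (hfin : {z | E n x z}.Finite) (hxy : E n x y)
    (hx : x ∈ freeSites r E c (n + 1)) (hy : y ∈ freeSites r E c (n + 1)) : c x = c y := by
  by_contra hc
  exact (exists_pairs_left_or_right hfin hx.1 hy.1 hxy hc).elim hx.2 hy.2

lemma colour_eq_of_forall_not_isPartner (hfin : ∀ n x, {z | E n x z}.Finite)
    (hconn : ∃ n, E n x y) (hx : ∀ z, ¬ IsPartner r E c x z) (hy : ∀ z, ¬ IsPartner r E c y z) :
    c x = c y :=
  let ⟨n, hn⟩ := hconn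
  colour_eq_of_mem_freeSites_succ (hfin n x) hn
    (mem_freeSites_of_forall_not_isPartner hx _) (mem_freeSites_of_forall_not_isPartner hy _)

lemma IsPartner.rel_iff_notMem_freeSites_succ (hE : Monotone E) (hfin : {z | E n x z}.Finite)
    (h : IsPartner r E c x y) : E n x y ↔ x ∉ freeSites r E c (n + 1) := by
  constructor
  · intro hxy hx
    obtain ⟨m, hm⟩ := h
    have hnm : n + 1 ≤ m := by
      by_contra hmn
      exact notMem_freeSites_iff.2 ⟨m, not_le.1 hmn, y, hm⟩ hx
    have hc := colour_eq_of_mem_freeSites_succ hfin hxy hx (freeSites_antitone hnm hm.mem_right)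
    exact Bool.not_ne_self (c x) (hm.colour_eq.symm.trans hc.symm)
  · intro hx
    obtain ⟨m, hm, z, hz⟩ := notMem_freeSites_iff.1 hx
    obtain rfl := h.unique ⟨m, hz⟩
    exact hE (Nat.le_of_lt_succ hm) hz.rel

end Partner

section Count

variable {V : Type*}

lemma ncard_exits_eq_abs_finsum {L : Set V} (hL : L.Finite) {φ : V → V}
    (hφ : Function.Involutive φ) {f : V → ℤ} (hodd : ∀ x, f (φ x) = -f x)
    (habs : ∀ x, |f x| = 1)
    (hexit : ∀ x ∈ L, φ x ∉ L → ∀ y ∈ L, φ y ∉ L → f x = f y) :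
    ({x ∈ L | φ x ∉ L}.ncard : ℤ) = |∑ᶠ x ∈ L, f x| := by
  classical
  lift L to Finset V using hL
  have hpaired : ∑ x ∈ L with φ x ∈ L, f x = 0 := by
    refine Finset.sum_involution (fun x _ => φ x) (fun x _ => ?_) (fun x _ hx hfix => ?_)
      (fun x hx => ?_) fun x _ => hφ x
    · rw [hodd, add_neg_cancel]
    · have := hodd x
      rw [hfix] at this
      omega
    · rw [Finset.mem_filter] at hx ⊢
      exact ⟨hx.2, (hφ x).symm ▸ hx.1⟩
  have hsum : ∑ᶠ x ∈ (L : Set V), f x = ∑ x ∈ L with φ x ∉ L, f x := by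
    rw [finsum_mem_coe_finset, ← Finset.sum_filter_add_sum_filter_not L (φ · ∈ L), hpaired,
      zero_add]
  have hset : {x ∈ (L : Set V) | φ x ∉ (L : Set V)} = ↑{x ∈ L | φ x ∉ L} := by
    ext x; simp
  rw [hsum, hset, Set.ncard_coe_finset]
  rcases Finset.eq_empty_or_nonempty {x ∈ L | φ x ∉ L} with hempty | ⟨a, ha⟩
  · simp [hempty]
  · rw [Finset.mem_filter] at ha
    have hconst : ∀ x ∈ ({x ∈ L | φ x ∉ L} : Finset V), f x = f a := fun x hx =>
      hexit x (Finset.mem_filter.1 hx).1 (Finset.mem_filter.1 hx).2 a ha.1 ha.2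
    rw [Finset.sum_congr rfl hconst, Finset.sum_const, nsmul_eq_mul, abs_mul, habs, mul_one,
      Nat.abs_cast]

variable {r : V → V → Prop} [IsStrictTotalOrder V r] {E : ℕ → Setoid V} {c : V → Bool}

lemma ncard_partner_exits_eq_abs_finsum (hE : Monotone E) (hfin : ∀ n x, {z | E n x z}.Finite)
    (hpartner : ∀ x, ∃ y, IsPartner r E c x y) (n : ℕ) (x : V) :
    ({y ∈ {z | E n x z} | partner r E c y ∉ {z | E n x z}}.ncard : ℤ) =
      |∑ᶠ y ∈ {z | E n x z}, if c y then 1 else -1| := by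
  have hφ (y : V) := isPartner_partner (hpartner y)
  have hfree (y : V) (hy : E n x y) (hexit : ¬ E n x (partner r E c y)) :
      y ∈ freeSites r E c (n + 1) := by
    by_contra hyfree
    exact hexit ((E n).trans hy
      (((hφ y).rel_iff_notMem_freeSites_succ hE (hfin n y)).2 hyfree))
  refine ncard_exits_eq_abs_finsum (hfin n x) (partner_involutive hpartner) (fun y => ?_)
    (fun y => ?_) fun y hy hy_exit z hz hz_exit => ?_
  · rw [(hφ y).colour_eq]
    cases c y <;> rfl
  · cases c y <;> rfl
  · rw [colour_eq_of_mem_freeSites_succ (hfin n y) ((E n).trans ((E n).symm hy) hz)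
      (hfree y hy hy_exit) (hfree z hz hz_exit)]

end Count

section Naturality

variable {V V' : Type*} {r : V → V → Prop} {r' : V' → V' → Prop} (e : r ≃r r')

lemma rankIn_map {A : Set V} {A' : Set V'} (hA : ∀ z, e z ∈ A' ↔ z ∈ A) (x : V) :
    rankIn r' A' (e x) = rankIn r A x := by
  rw [rankIn, rankIn, ← e.injective.encard_image]
  congr 1
  ext z
  obtain ⟨z, rfl⟩ := e.surjective z
  simp only [Set.mem_ofPred_eq, hA, e.map_rel_iff, e.injective.mem_set_image]

lemma pairs_map_iff {s : Setoid V} {s' : Setoid V'} {c : V → Bool} {c' : V' → Bool} {W : Set V}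
    {W' : Set V'} (hs : ∀ x y, s' (e x) (e y) ↔ s x y) (hc : ∀ x, c' (e x) = c x)
    (hW : ∀ x, e x ∈ W' ↔ x ∈ W) (x y : V) :
    Pairs r' s' c' W' (e x) (e y) ↔ Pairs r s c W x y := by
  have hpeers (x z : V) : e z ∈ peers s' c' W' (e x) ↔ z ∈ peers s c W x := by
    simp only [peers, Set.mem_ofPred_eq, hW, hs, hc]
  simp only [pairs_iff, hW, hs, hc, rankIn_map e (hpeers _)]

variable {E : ℕ → Setoid V} {E' : ℕ → Setoid V'} {c : V → Bool} {c' : V' → Bool}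
  (hE : ∀ n x y, E' n (e x) (e y) ↔ E n x y) (hc : ∀ x, c' (e x) = c x)
include hE hc

lemma mem_freeSites_map_iff (n : ℕ) (x : V) :
    e x ∈ freeSites r' E' c' n ↔ x ∈ freeSites r E c n := by
  induction n generalizing x with
  | zero => exact iff_of_true trivial trivial
  | succ n ih =>
    simp only [freeSites, Set.mem_ofPred_eq, e.surjective.exists, ih,
      pairs_map_iff e (hE n) hc ih]

lemma isPartner_map_iff (x y : V) : IsPartner r' E' c' (e x) (e y) ↔ IsPartner r E c x y :=
  exists_congr fun n => pairs_map_iff e (hE n) hc (mem_freeSites_map_iff e hE hc n) x y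

lemma partner_map [IsStrictTotalOrder V r] [IsStrictTotalOrder V' r'] (x : V) :
    partner r' E' c' (e x) = e (partner r E c x) := by
  rw [partner_eq_iff, e.surjective.forall]
  simp only [isPartner_map_iff e hE hc, e.injective.eq_iff]
  exact partner_eq_iff.1 rfl

end Naturality

section Measurability

variable {Ω V : Type*} [MeasurableSpace Ω] [Countable V] {r : V → V → Prop}

lemma measurable_rankIn {A : Ω → Set V} (hA : ∀ z, MeasurableSet {ω | z ∈ A ω}) (x : V) :
    Measurable fun ω => rankIn r (A ω) x :=
  measurable_encard.comp <| measurable_set_iff.2 fun z =>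
    (measurableSet_setOfPred.1 (hA z)).and measurable_const

lemma measurableSet_pairs {s : Ω → Setoid V} {c : Ω → V → Bool} {W : Ω → Set V}
    (hs : ∀ x y, MeasurableSet {ω | s ω x y}) (hc : ∀ x, Measurable fun ω => c ω x)
    (hW : ∀ x, MeasurableSet {ω | x ∈ W ω}) (x y : V) :
    MeasurableSet {ω | Pairs r (s ω) (c ω) (W ω) x y} := by
  have hpeers (x z : V) : MeasurableSet {ω | z ∈ peers (s ω) (c ω) (W ω) x} :=
    (hW z).inter ((hs x z).inter (measurableSet_eq_fun (hc z) (hc x)))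
  have hrank (x : V) : Measurable fun ω => rankIn r (peers (s ω) (c ω) (W ω) x) x :=
    measurable_rankIn (hpeers x) x
  simp only [pairs_iff]
  exact (hW x).inter <| (hW y).inter <| (hs x y).inter <|
    (measurableSet_eq_fun (hc y) ((Measurable.of_discrete (f := Bool.not)).comp (hc x))).inter <|
    (measurableSet_eq_fun (hrank x) (hrank y)).inter
      (hrank x (MeasurableSet.singleton ⊤).compl)

variable {E : Ω → ℕ → Setoid V} {c : Ω → V → Bool}
  (hE : ∀ n x y, MeasurableSet {ω | E ω n x y}) (hc : ∀ x, Measurable fun ω => c ω x)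
include hE hc

lemma measurableSet_mem_freeSites (n : ℕ) (x : V) :
    MeasurableSet {ω | x ∈ freeSites r (E ω) (c ω) n} := by
  induction n generalizing x with
  | zero => exact .univ
  | succ n ih =>
    have hpaired : MeasurableSet
        {ω | ∃ y, Pairs r (E ω n) (c ω) (freeSites r (E ω) (c ω) n) x y} := by
      simp only [Set.ofPred_exists]
      exact .iUnion fun y => measurableSet_pairs (hE n) hc ih x y
    exact (ih x).inter hpaired.compl

lemma measurableSet_isPartner (x y : V) : MeasurableSet {ω | IsPartner r (E ω) (c ω) x y} := by
  simp only [IsPartner, Set.ofPred_exists]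
  exact .iUnion fun n => measurableSet_pairs (hE n) hc (measurableSet_mem_freeSites hE hc n) x y

lemma measurableSet_exists_isPartner (x : V) :
    MeasurableSet {ω | ∃ y, IsPartner r (E ω) (c ω) x y} := by
  simp only [Set.ofPred_exists]
  exact .iUnion fun y => measurableSet_isPartner hE hc x y

lemma measurable_partner [IsStrictTotalOrder V r] [MeasurableSpace V]
    [MeasurableSingletonClass V] (x : V) : Measurable fun ω => partner r (E ω) (c ω) x := by
  refine measurable_to_countable' fun y => ?_
  simp only [Set.preimage, Set.mem_singleton_iff, partner_eq_iff, ← not_exists]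
  exact (measurableSet_isPartner hE hc x y).union
    ((measurableSet_exists_isPartner hE hc x).compl.inter (.const _))

end Measurability

section MassTransport

variable {Ω G : Type*} [MeasurableSpace Ω] [AddGroup G] [Countable G] {μ : Measure Ω}
  {θ : G → Ω → Ω}

lemma measure_exists_right_eq_exists_left (hθ : ∀ z, MeasurePreserving (θ z) μ μ)
    {R : Ω → G → G → Prop} (hR : ∀ x y, MeasurableSet {ω | R ω x y})
    (hequiv : ∀ ω z x y, R (θ z ω) (x + z) (y + z) ↔ R ω x y)
    (hright : ∀ ω x y z, R ω x y → R ω x z → y = z)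
    (hleft : ∀ ω x y z, R ω x z → R ω y z → x = y) :
    μ {ω | ∃ y, R ω 0 y} = μ {ω | ∃ y, R ω y 0} := by
  have htransport (y : G) : μ {ω | R ω 0 y} = μ {ω | R ω (-y) 0} := by
    rw [← (hθ y).measure_preimage (hR 0 y).nullMeasurableSet]
    congr 1
    ext ω
    simpa using hequiv ω y (-y) 0
  simp only [Set.ofPred_exists]
  rw [measure_iUnion ?_ (hR 0), measure_iUnion ?_ (hR · 0), tsum_congr htransport]
  · exact (Equiv.neg G).tsum_eq fun y => μ {ω | R ω y 0}
  · exact fun x y hxy => Set.disjoint_left.2 fun ω hx hy => hxy (hleft ω x y 0 hx hy)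
  · exact fun x y hxy => Set.disjoint_left.2 fun ω hx hy => hxy (hright ω 0 x y hx hy)

end MassTransport

section Equivariance

variable {Ω G : Type*} [AddGroup G] {θ : G → Ω → Ω} {r : G → G → Prop} {E : Ω → ℕ → Setoid G}
  {c : Ω → G → Bool} (hr : ∀ z x y, r (x + z) (y + z) ↔ r x y)
  (hE_equiv : ∀ ω z n x y, E (θ z ω) n (x + z) (y + z) ↔ E ω n x y)
  (hc_equiv : ∀ ω z x, c (θ z ω) (x + z) = c ω x)
include hr hE_equiv hc_equiv

lemma isPartner_add_iff (ω : Ω) (z x y : G) :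
    IsPartner r (E (θ z ω)) (c (θ z ω)) (x + z) (y + z) ↔ IsPartner r (E ω) (c ω) x y :=
  isPartner_map_iff (e := (⟨Equiv.addRight z, hr z _ _⟩ : r ≃r r)) (hE_equiv ω z)
    (hc_equiv ω z) x y

lemma exists_isPartner_add_iff (ω : Ω) (z x : G) :
    (∃ y, IsPartner r (E (θ z ω)) (c (θ z ω)) (x + z) y) ↔ ∃ y, IsPartner r (E ω) (c ω) x y := by
  rw [(Equiv.addRight z).surjective.exists]
  exact exists_congr (isPartner_add_iff hr hE_equiv hc_equiv ω z x)

lemma partner_add [IsStrictTotalOrder G r] (ω : Ω) (z x : G) :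
    partner r (E (θ z ω)) (c (θ z ω)) (x + z) = partner r (E ω) (c ω) x + z :=
  partner_map (e := (⟨Equiv.addRight z, hr z _ _⟩ : r ≃r r)) (hE_equiv ω z) (hc_equiv ω z) x

lemma preimage_exists_unmatched_colour (z : G) (b : Bool) :
    θ z ⁻¹' {ω | ∃ x, c ω x = b ∧ ¬ ∃ y, IsPartner r (E ω) (c ω) x y} =
      {ω | ∃ x, c ω x = b ∧ ¬ ∃ y, IsPartner r (E ω) (c ω) x y} := by
  ext ω
  rw [Set.mem_preimage, Set.mem_ofPred_eq, (Equiv.addRight z).surjective.exists]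
  simp only [Equiv.coe_addRight, hc_equiv, exists_isPartner_add_iff hr hE_equiv hc_equiv ω z,
    Set.mem_ofPred_eq]

end Equivariance

section Stationary

variable {Ω G : Type*} [MeasurableSpace Ω] [AddGroup G] [Countable G] {μ : Measure Ω}
  {θ : G → Ω → Ω} {r : G → G → Prop} {E : Ω → ℕ → Setoid G} {c : Ω → G → Bool}
  [IsStrictTotalOrder G r]
  (hθ : ∀ z, MeasurePreserving (θ z) μ μ)
  (hr : ∀ z x y, r (x + z) (y + z) ↔ r x y)
  (hE : ∀ n x y, MeasurableSet {ω | E ω n x y})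
  (hE_equiv : ∀ ω z n x y, E (θ z ω) n (x + z) (y + z) ↔ E ω n x y)
  (hc : ∀ x, Measurable fun ω => c ω x)
  (hc_equiv : ∀ ω z x, c (θ z ω) (x + z) = c ω x)
include hθ hr hE hE_equiv hc hc_equiv

lemma measure_matched_colour_eq :
    μ {ω | c ω 0 = true ∧ ∃ y, IsPartner r (E ω) (c ω) 0 y} =
      μ {ω | c ω 0 = false ∧ ∃ y, IsPartner r (E ω) (c ω) 0 y} := by
  have htransport := measure_exists_right_eq_exists_left hθ
    (R := fun ω x y => c ω x = true ∧ IsPartner r (E ω) (c ω) x y)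
    (fun x y => (hc x (.singleton true)).inter (measurableSet_isPartner hE hc x y))
    (fun ω z x y => by rw [hc_equiv, isPartner_add_iff hr hE_equiv hc_equiv])
    (fun ω x y z hy hz => hy.2.unique hz.2)
    (fun ω x y z hx hy => hx.2.symm.unique hy.2.symm)
  have hswap (ω : Ω) (y : G) : (c ω y = true ∧ IsPartner r (E ω) (c ω) y 0) ↔
      c ω 0 = false ∧ IsPartner r (E ω) (c ω) 0 y := by
    constructor
    · rintro ⟨hcol, h⟩
      exact ⟨by rw [h.colour_eq, hcol, Bool.not_true], h.symm⟩
    · rintro ⟨hcol, h⟩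
      exact ⟨by rw [h.colour_eq, hcol, Bool.not_false], h.symm⟩
  simpa only [hswap, exists_and_left] using htransport

lemma measure_unmatched_colour_eq [IsFiniteMeasure μ]
    (hbal : μ {ω | c ω 0 = true} = μ {ω | c ω 0 = false}) (b : Bool) :
    μ {ω | c ω 0 = b ∧ ¬ ∃ y, IsPartner r (E ω) (c ω) 0 y} =
      μ {ω | c ω 0 = !b ∧ ¬ ∃ y, IsPartner r (E ω) (c ω) 0 y} := by
  have hmatched := measurableSet_exists_isPartner (r := r) hE hc 0
  have htrue_false : μ {ω | c ω 0 = true ∧ ¬ ∃ y, IsPartner r (E ω) (c ω) 0 y} =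
      μ {ω | c ω 0 = false ∧ ¬ ∃ y, IsPartner r (E ω) (c ω) 0 y} := by
    rw [← measure_inter_add_sdiff _ hmatched,
      ← measure_inter_add_sdiff {ω | c ω 0 = false} hmatched] at hbal
    exact (ENNReal.add_right_inj (measure_ne_top _ _)).1
      ((congrArg (· + _) (measure_matched_colour_eq hθ hr hE hE_equiv hc hc_equiv).symm).trans hbal)
  cases b
  · exact htrue_false.symm
  · exact htrue_false

variable [IsFiniteMeasure μ]
  (hbal : ∀ A, MeasurableSet A → (∀ z, θ z ⁻¹' A = A) →
    μ (A ∩ {ω | c ω 0 = true}) = μ (A ∩ {ω | c ω 0 = false}))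
  (hfin : ∀ᵐ ω ∂μ, ∀ n x, {z | E ω n x z}.Finite)
  (hconn : ∀ᵐ ω ∂μ, ∀ x y, ∃ n, E ω n x y)
include hbal hfin hconn

lemma measure_unmatched_colour_eq_zero (b : Bool) :
    μ {ω | c ω 0 = b ∧ ¬ ∃ y, IsPartner r (E ω) (c ω) 0 y} = 0 := by
  set A : Set Ω := {ω | ∃ x, c ω x = b ∧ ¬ ∃ y, IsPartner r (E ω) (c ω) x y} with hA_def
  have hA : MeasurableSet A := by
    simp only [hA_def, Set.ofPred_exists (p := fun x ω => c ω x = b ∧ _)]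
    exact .iUnion fun x =>
      (hc x (.singleton b)).inter (measurableSet_exists_isPartner hE hc x).compl
  have hA_inv (z : G) : θ z ⁻¹' A = A :=
    preimage_exists_unmatched_colour hr hE_equiv hc_equiv z b
  have hθA (z : G) : MeasurePreserving (θ z) (μ.restrict A) (μ.restrict A) := by
    simpa only [hA_inv] using (hθ z).restrict_preimage hA
  have hbalA : μ.restrict A {ω | c ω 0 = true} = μ.restrict A {ω | c ω 0 = false} := by
    simpa only [Measure.restrict_apply' hA, Set.inter_comm A] using hbal A hA hA_inv
  have hopposite : μ.restrict A {ω | c ω 0 = !b ∧ ¬ ∃ y, IsPartner r (E ω) (c ω) 0 y} = 0 := by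
    rw [Measure.restrict_apply' hA, measure_eq_zero_iff_ae_notMem]
    filter_upwards [hfin, hconn] with ω hω_fin hω_conn ⟨⟨hc₀, h₀⟩, x, hcx, hx⟩
    have hcolour := colour_eq_of_forall_not_isPartner hω_fin (hω_conn x 0) (not_exists.1 hx)
      (not_exists.1 h₀)
    exact Bool.not_ne_self b (by rw [← hc₀, ← hcolour, hcx])
  have hsub : {ω | c ω 0 = b ∧ ¬ ∃ y, IsPartner r (E ω) (c ω) 0 y} ⊆ A := fun ω hω => ⟨0, hω⟩
  -- The restriction of `μ` to the invariant event `A` is again stationary and balanced, so under it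
  -- an unmatched origin has either colour equally often.
  rw [← measure_unmatched_colour_eq hθA hr hE hE_equiv hc hc_equiv hbalA,
    Measure.restrict_apply' hA, Set.inter_eq_left.2 hsub] at hopposite
  exact hopposite

lemma ae_forall_exists_isPartner : ∀ᵐ ω ∂μ, ∀ x, ∃ y, IsPartner r (E ω) (c ω) x y := by
  have hzero : ∀ᵐ ω ∂μ, ∃ y, IsPartner r (E ω) (c ω) 0 y := by
    have hnull (b : Bool) := measure_eq_zero_iff_ae_notMem.1
      (measure_unmatched_colour_eq_zero hθ hr hE hE_equiv hc hc_equiv hbal hfin hconn b)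
    filter_upwards [hnull true, hnull false] with ω htrue hfalse
    by_contra hω
    cases hcol : c ω 0
    · exact hfalse ⟨hcol, hω⟩
    · exact htrue ⟨hcol, hω⟩
  refine ae_all_iff.2 fun x => ?_
  filter_upwards [(hθ (-x)).quasiMeasurePreserving.ae hzero] with ω hω
  rwa [← exists_isPartner_add_iff hr hE_equiv hc_equiv ω (-x), add_neg_cancel]

end Stationary

section Clumping

variable {V : Type*}

/-- A clumping: at every scale `n ≥ 1` the sets `C n x` are the classes of a partition of `V`, and
the partitions get coarser as `n` grows. -/
structure IsClumping (C : ℕ → V → Set V) : Prop where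
  mem_self : ∀ n, 1 ≤ n → ∀ x, x ∈ C n x
  eq_of_inter_nonempty : ∀ n, 1 ≤ n → ∀ x y, (C n x ∩ C n y).Nonempty → C n x = C n y
  subset_succ : ∀ n, 1 ≤ n → ∀ x, C n x ⊆ C (n + 1) x

/-- The equivalence relation of lying in the same `(n + 1)`-clump. The index is shifted because
clumps are indexed from `1` and the steps of the matching algorithm from `0`. -/
def clumpSetoid (C : ℕ → V → Set V) (n : ℕ) : Setoid V := Setoid.ker (C (n + 1))

namespace IsClumping

variable {C : ℕ → V → Set V} (hC : IsClumping C)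
include hC

lemma clumpSetoid_iff_mem {n : ℕ} {x y : V} : clumpSetoid C n x y ↔ y ∈ C (n + 1) x := by
  have hy := hC.mem_self (n + 1) n.succ_pos y
  rw [clumpSetoid, Setoid.ker_def]
  exact ⟨fun h => h ▸ hy,
    fun h => hC.eq_of_inter_nonempty (n + 1) n.succ_pos x y ⟨y, h, hy⟩⟩

lemma setOf_clumpSetoid (n : ℕ) (x : V) : {y | clumpSetoid C n x y} = C (n + 1) x :=
  Set.ext fun _ => hC.clumpSetoid_iff_mem

lemma monotone_clumpSetoid : Monotone (clumpSetoid C) :=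
  monotone_nat_of_le_succ fun n x _ hxy => hC.clumpSetoid_iff_mem.2 <|
    hC.subset_succ (n + 1) n.succ_pos x (hC.clumpSetoid_iff_mem.1 hxy)

lemma exists_clumpSetoid {o : V} (hcover : ⋃ n ∈ {n : ℕ | 1 ≤ n}, C n o = Set.univ) (x y : V) :
    ∃ n, clumpSetoid C n x y := by
  have hjoin (x : V) : ∃ n, clumpSetoid C n o x := by
    obtain ⟨n, hn, hx⟩ := Set.mem_iUnion₂.1 (hcover ▸ Set.mem_univ x)
    obtain ⟨m, rfl⟩ := Nat.exists_eq_add_of_le' hn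
    exact ⟨m, hC.clumpSetoid_iff_mem.2 hx⟩
  obtain ⟨m, hm⟩ := hjoin x
  obtain ⟨n, hn⟩ := hjoin y
  exact ⟨max m n, Setoid.trans' _
    (Setoid.symm' _ (hC.monotone_clumpSetoid (le_max_left m n) hm))
    (hC.monotone_clumpSetoid (le_max_right m n) hn)⟩

end IsClumping

end Clumping

section Bessel

lemma eq_zero_of_orthonormal_of_forall_inner_eq {𝕜 E ι : Type*} [RCLike 𝕜]
    [SeminormedAddCommGroup E] [InnerProductSpace 𝕜 E] [Infinite ι] {v : ι → E}
    (hv : Orthonormal 𝕜 v) {x : E} {a : 𝕜} (h : ∀ i, inner 𝕜 (v i) x = a) : a = 0 := by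
  have hsum := hv.inner_products_summable (x := x)
  simpa only [h, summable_const_iff, sq_eq_zero_iff, norm_eq_zero] using hsum

lemma eq_zero_of_orthonormal_of_forall_setIntegral_eq {𝕜 Ω ι : Type*} [RCLike 𝕜]
    [MeasurableSpace Ω] {μ : Measure Ω} [Infinite ι] {f : ι → Lp 𝕜 2 μ} (hf : Orthonormal 𝕜 f)
    {A : Set Ω} (hA : MeasurableSet A) (hμA : μ A ≠ ∞) {a : 𝕜}
    (h : ∀ i, ∫ ω in A, f i ω ∂μ = a) : a = 0 := by
  refine (map_eq_zero (starRingEnd 𝕜)).1 <| eq_zero_of_orthonormal_of_forall_inner_eq hf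
    (x := indicatorConstLp 2 hA hμA 1) fun i => ?_
  rw [← inner_conj_symm, L2.inner_indicatorConstLp_one, h]

end Bessel

section Bernoulli

open ProbabilityTheory

variable {d : ℕ} {P : Measure (Config d)}

lemma measurable_pm1 (x : Site d) : Measurable fun γ : Config d => (pm1 γ x : ℝ) :=
  (Measurable.of_discrete (f := fun b : Bool => ((if b then 1 else -1 : ℤ) : ℝ))).comp
    (measurable_pi_apply x)

lemma pm1_mul_self (γ : Config d) (x : Site d) : pm1 γ x * pm1 γ x = 1 := by
  rw [pm1]; split_ifs <;> rfl

lemma memLp_pm1 [IsFiniteMeasure P] (p : ℝ≥0∞) (x : Site d) :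
    MemLp (fun γ => (pm1 γ x : ℝ)) p P :=
  .of_bound (measurable_pm1 x).aestronglyMeasurable 1 <| .of_forall fun γ => by
    rw [pm1]; split_ifs <;> simp

lemma integral_pm1_eq_sub [IsFiniteMeasure P] (x : Site d) :
    ∫ γ, (pm1 γ x : ℝ) ∂P = P.real {γ | γ x = true} - P.real {γ | γ x = false} := by
  have hmeas (b : Bool) : MeasurableSet {γ : Config d | γ x = b} :=
    (measurable_pi_apply x : Measurable fun γ : Config d => γ x) (.singleton b)
  have hint (b : Bool) : Integrable ({γ : Config d | γ x = b}.indicator (1 : Config d → ℝ)) P :=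
    (integrable_const 1).indicator (hmeas b)
  rw [← integral_indicator_one (hmeas true), ← integral_indicator_one (hmeas false),
    ← integral_sub (hint true) (hint false)]
  refine integral_congr_ae (.of_forall fun γ => ?_)
  cases hγ : γ x <;> simp [pm1, hγ]

namespace IsBernoulliHalfProduct

lemma eq_infinitePi (hP : IsBernoulliHalfProduct P) :
    P = Measure.infinitePi fun _ => uniformOn (Set.univ : Set Bool) := by
  have := hP.1
  refine IsProjectiveLimit.unique (fun I => ?_) (Measure.isProjectiveLimit_infinitePi _)
  refine Measure.ext_of_singleton fun f : I → Bool => ?_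
  classical
  have hcoin (b : Bool) : uniformOn Set.univ {b} = 1 / 2 := by
    rw [uniformOn_univ, Measure.count_singleton, Fintype.card_bool, Nat.cast_ofNat]
  have hpre : I.restrict ⁻¹' ({f} : Set (I → Bool)) =
      {γ : Config d | ∀ x ∈ I, γ x = if hx : x ∈ I then f ⟨x, hx⟩ else false} := by
    ext γ
    simp +contextual [funext_iff]
  rw [Measure.map_apply (Finset.measurable_restrict I) (.singleton f), hpre, hP.2,
    Measure.pi_singleton]
  simp only [hcoin, Finset.prod_const, Finset.card_univ, Fintype.card_coe]

lemma measurePreserving_shiftCfg (hP : IsBernoulliHalfProduct P) (z : Site d) :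
    MeasurePreserving (shiftCfg z) P P where
  measurable := measurable_pi_lambda _ fun x => measurable_pi_apply (x - z)
  map_eq := by
    rw [hP.eq_infinitePi]
    exact Measure.map_infinitePi_infinitePi_of_inj (sub_left_injective (b := z))

lemma integral_pm1 (hP : IsBernoulliHalfProduct P) (x : Site d) :
    ∫ γ, (pm1 γ x : ℝ) ∂P = 0 := by
  have := hP.1
  have hhalf (b : Bool) : P {γ | γ x = b} = 1 / 2 := by
    simpa only [Finset.mem_singleton, forall_eq, Finset.card_singleton, pow_one]
      using hP.2 {x} fun _ => b
  rw [integral_pm1_eq_sub, Measure.real, Measure.real, hhalf, hhalf, sub_self]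

lemma integral_pm1_mul_pm1 (hP : IsBernoulliHalfProduct P) (x y : Site d) :
    ∫ γ, (pm1 γ x : ℝ) * pm1 γ y ∂P = if x = y then 1 else 0 := by
  have := hP.1
  split_ifs with hxy
  · subst hxy
    simp only [← Int.cast_mul, pm1_mul_self, Int.cast_one, integral_const, probReal_univ, one_smul]
  · have hindep : iIndepFun (fun z γ => (pm1 γ z : ℝ)) P := by
      rw [hP.eq_infinitePi]
      exact iIndepFun_infinitePi (X := fun _ (b : Bool) => ((if b then 1 else -1 : ℤ) : ℝ))
        fun _ => .of_discrete
    rw [(hindep.indepFun hxy).integral_fun_mul_eq_mul_integral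
      (measurable_pm1 x).aestronglyMeasurable (measurable_pm1 y).aestronglyMeasurable,
      hP.integral_pm1, zero_mul]

lemma orthonormal_pm1 [IsFiniteMeasure P] (hP : IsBernoulliHalfProduct P) :
    Orthonormal ℝ fun x : Site d => (memLp_pm1 (P := P) 2 x).toLp := by
  classical
  refine orthonormal_iff_ite.2 fun x y => ?_
  rw [← hP.integral_pm1_mul_pm1 x y, L2.inner_def]
  refine integral_congr_ae ?_
  filter_upwards [(memLp_pm1 (P := P) 2 x).coeFn_toLp, (memLp_pm1 (P := P) 2 y).coeFn_toLp]
    with γ hx hy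
  rw [hx, hy, real_inner_eq_re_inner]
  simp [mul_comm]

lemma setIntegral_pm1_eq_zero [Infinite (Site d)] (hP : IsBernoulliHalfProduct P)
    {A : Set (Config d)} (hA : MeasurableSet A) (hA_inv : ∀ z, shiftCfg z ⁻¹' A = A) :
    ∫ γ in A, (pm1 γ 0 : ℝ) ∂P = 0 := by
  have := hP.1
  refine eq_zero_of_orthonormal_of_forall_setIntegral_eq hP.orthonormal_pm1 hA
    (measure_ne_top P A) fun x => ?_
  have hshift := (hP.measurePreserving_shiftCfg x).restrict_preimage hA
  rw [hA_inv] at hshift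
  calc ∫ γ in A, (memLp_pm1 (P := P) 2 x).toLp _ γ ∂P
      = ∫ γ in A, (pm1 γ x : ℝ) ∂P :=
        setIntegral_congr_ae hA ((memLp_pm1 2 x).coeFn_toLp.mono fun _ h _ => h)
    _ = ∫ γ, (pm1 γ x : ℝ) ∂(P.restrict A).map (shiftCfg x) := by rw [hshift.map_eq]
    _ = ∫ γ in A, (pm1 (shiftCfg x γ) x : ℝ) ∂P :=
        integral_map hshift.aemeasurable (measurable_pm1 x).aestronglyMeasurable
    _ = ∫ γ in A, (pm1 γ 0 : ℝ) ∂P := by simp only [pm1, shiftCfg, sub_self]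

lemma measure_inter_colour_eq [Infinite (Site d)] (hP : IsBernoulliHalfProduct P)
    {A : Set (Config d)} (hA : MeasurableSet A) (hA_inv : ∀ z, shiftCfg z ⁻¹' A = A) :
    P (A ∩ {γ | γ 0 = true}) = P (A ∩ {γ | γ 0 = false}) := by
  have := hP.1
  have hzero := hP.setIntegral_pm1_eq_zero hA hA_inv
  rw [integral_pm1_eq_sub, sub_eq_zero, measureReal_eq_measureReal_iff,
    Measure.restrict_apply' hA, Measure.restrict_apply' hA] at hzero
  rwa [Set.inter_comm A, Set.inter_comm A]

end IsBernoulliHalfProduct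

end Bernoulli

section Lex

variable {d : ℕ}

/-- The lexicographic order on sites: the translation-invariant order along which the matching
algorithm ranks the sites of a clump. -/
def LexLT (x y : Site d) : Prop := toLex x < toLex y

instance : IsStrictTotalOrder (Site d) LexLT :=
  inferInstanceAs (IsStrictTotalOrder (Lex (Site d)) (· < ·))

lemma lexLT_add_right_iff (z x y : Site d) : LexLT (x + z) (y + z) ↔ LexLT x y :=
  add_lt_add_iff_right (toLex z)

end Lex

theorem statement4_general {Ω G : Type*} [MeasurableSpace Ω] [AddGroup G] [Countable G]
    [MeasurableSpace G] [MeasurableSingletonClass G] (r : G → G → Prop) [IsStrictTotalOrder G r]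
    (hr : ∀ z x y, r (x + z) (y + z) ↔ r x y) (μ : Measure Ω) [IsFiniteMeasure μ]
    (θ : G → Ω → Ω) (hθ : ∀ z, MeasurePreserving (θ z) μ μ)
    (c : Ω → G → Bool) (hc : ∀ x, Measurable fun ω => c ω x)
    (hc_equiv : ∀ ω z x, c (θ z ω) (x + z) = c ω x)
    (hbal : ∀ A, MeasurableSet A → (∀ z, θ z ⁻¹' A = A) →
      μ (A ∩ {ω | c ω 0 = true}) = μ (A ∩ {ω | c ω 0 = false}))
    (C : Ω → ℕ → G → Set G) (hC : ∀ ω, IsClumping (C ω))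
    (hC_meas : ∀ n x y, MeasurableSet {ω | y ∈ C ω n x})
    (hC_equiv : ∀ ω n, 1 ≤ n → ∀ x z, C (θ z ω) n (x + z) = (· + z) '' C ω n x)
    (hC_ae : ∀ᵐ ω ∂μ, (∀ n x, 1 ≤ n → (C ω n x).Finite) ∧
      ⋃ n ∈ {n : ℕ | 1 ≤ n}, C ω n 0 = Set.univ) :
    ∃ Φ : Ω → G → G, (∀ x, Measurable fun ω => Φ ω x) ∧
      (∀ ω z x, Φ (θ z ω) (x + z) = Φ ω x + z) ∧
      (∀ᵐ ω ∂μ, Function.Involutive (Φ ω) ∧ ∀ x, c ω (Φ ω x) = !c ω x) ∧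
      ∀ᵐ ω ∂μ, (∀ x, ∃ n, 1 ≤ n ∧ Φ ω x ∈ C ω n x) ∧
        ∀ n, 1 ≤ n → ∀ x, ({y ∈ C ω n x | Φ ω y ∉ C ω n x}.ncard : ℤ) =
          |∑ᶠ y ∈ C ω n x, if c ω y then 1 else -1| := by
  have hE (n : ℕ) (x y : G) : MeasurableSet {ω | clumpSetoid (C ω) n x y} := by
    simpa only [(hC _).clumpSetoid_iff_mem] using hC_meas (n + 1) x y
  have hE_equiv (ω : Ω) (z : G) (n : ℕ) (x y : G) :
      clumpSetoid (C (θ z ω)) n (x + z) (y + z) ↔ clumpSetoid (C ω) n x y := by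
    rw [(hC _).clumpSetoid_iff_mem, (hC _).clumpSetoid_iff_mem, hC_equiv ω _ n.succ_pos,
      (add_left_injective z).mem_set_image]
  have hfin : ∀ᵐ ω ∂μ, ∀ n x, {y | clumpSetoid (C ω) n x y}.Finite := hC_ae.mono fun ω h n x =>
    (hC ω).setOf_clumpSetoid n x ▸ h.1 (n + 1) x n.succ_pos
  have hconn : ∀ᵐ ω ∂μ, ∀ x y, ∃ n, clumpSetoid (C ω) n x y :=
    hC_ae.mono fun ω h => (hC ω).exists_clumpSetoid h.2
  have hpartner := ae_forall_exists_isPartner hθ hr hE hE_equiv hc hc_equiv hbal hfin hconn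
  refine ⟨fun ω => partner r (clumpSetoid (C ω)) (c ω), measurable_partner hE hc,
    partner_add (E := fun ω => clumpSetoid (C ω)) hr hE_equiv hc_equiv, ?_, ?_⟩
  · filter_upwards [hpartner] with ω hω
    exact ⟨partner_involutive hω, fun x => (isPartner_partner (hω x)).colour_eq⟩
  · filter_upwards [hfin, hpartner] with ω hω_fin hω
    refine ⟨fun x => ?_, fun n hn x => ?_⟩
    · obtain ⟨n, hn⟩ := isPartner_partner (hω x)
      exact ⟨n + 1, n.succ_pos, (hC ω).clumpSetoid_iff_mem.1 hn.rel⟩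
    · obtain ⟨m, rfl⟩ := Nat.exists_eq_add_of_le' hn
      simpa only [(hC ω).setOf_clumpSetoid] using
        ncard_partner_exits_eq_abs_finsum (hC ω).monotone_clumpSetoid hω_fin hω m x

/-- From a locally finite connected clumping rule one obtains a translation-equivariant
matching rule matching maximally within clumps. -/
theorem statement4 (d : ℕ) (hd : 1 ≤ d)
    (P : Measure (Config d)) (hP : IsBernoulliHalfProduct P)
    (C : Config d → ℕ → Site d → Set (Site d))
    (hmeas : ∀ (n : ℕ) (x y : Site d), MeasurableSet {γ | y ∈ C γ n x})
    (hprop : ∀ (γ : Config d) (n : ℕ), 1 ≤ n → ∀ x y z : Site d,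
        x ∈ C γ n x ∧
        ((C γ n x ∩ C γ n y).Nonempty → C γ n x = C γ n y) ∧
        C γ n x ⊆ C γ (n + 1) x ∧
        C (shiftCfg z γ) n (x + z) = (· + z) '' C γ n x)
    (hae : ∀ᵐ γ ∂P, (∀ (n : ℕ) (x : Site d), 1 ≤ n → (C γ n x).Finite) ∧
        ⋃ n ∈ {n : ℕ | 1 ≤ n}, C γ n 0 = Set.univ) :
    ∃ Φ : Config d → Site d → Site d,
      IsMatchingRule P Φ ∧ IsEquivariant P Φ ∧
        ∀ᵐ γ ∂P,
          (∀ x : Site d, ∃ n : ℕ, 1 ≤ n ∧ Φ γ x ∈ C γ n x) ∧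
          ∀ (n : ℕ), 1 ≤ n → ∀ x : Site d,
            (({y ∈ C γ n x | Φ γ y ∉ C γ n x}.ncard : ℤ)
              = |∑ᶠ y ∈ C γ n x, pm1 γ y|) := by
  have := hP.1
  have : Nonempty (Fin d) := Fin.pos_iff_nonempty.1 hd
  obtain ⟨Φ, hΦ_meas, hΦ_equiv, hΦ_match, hΦ_clump⟩ := statement4_general LexLT
    lexLT_add_right_iff P shiftCfg hP.measurePreserving_shiftCfg (fun γ => γ) measurable_pi_apply
    (fun γ z x => congrArg γ (add_sub_cancel_right x z))
    (fun A hA hA_inv => hP.measure_inter_colour_eq hA hA_inv) C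
    (fun γ => ⟨fun n hn x => (hprop γ n hn x x 0).1, fun n hn x y => (hprop γ n hn x y 0).2.1,
      fun n hn x => (hprop γ n hn x x 0).2.2.1⟩)
    hmeas (fun γ n hn x z => (hprop γ n hn x x z).2.2.2) hae
  exact ⟨Φ, ⟨hΦ_meas, hΦ_match.mono fun γ h => ⟨h.1.bijective, h⟩⟩,
    fun z x => .of_forall fun γ => hΦ_equiv γ z x, hΦ_clump⟩

end
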